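/- For all integers n ≥ 2 and d ≥ 4, setting m = ⌊(d−2)/2⌋, one has the binomial inequality C(m+n−1, n−1) < (d−1)^{n−1}. -/

import Mathlib

theorem choose_le_aux (m k : ℕ) : Nat.choose (m + k) k ≤ (m + 1) ^ k := by
  induction k with
  | zero => simp
  | succ k ih =>
    have h := Nat.add_one_mul_choose_eq (m + k) k
    have h2 : m + k + 1 ≤ (m + 1) * (k + 1) := by nlinarith [Nat.zero_le (m * k)]
    have h3 : (m + k + 1) * Nat.choose (m + k) k ≤ ((m + 1) * (k + 1)) * (m + 1) ^ k :=
      Nat.mul_le_mul h2 ih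
    refine Nat.le_of_mul_le_mul_right (c := k + 1) ?_ (Nat.succ_pos k)
    calc Nat.choose (m + (k + 1)) (k + 1) * (k + 1)
        = (m + k + 1) * Nat.choose (m + k) k := h.symm
      _ ≤ ((m + 1) * (k + 1)) * (m + 1) ^ k := h3
      _ = (m + 1) ^ (k + 1) * (k + 1) := by ring

/-- The binomial inequality `C(m+n-1, n-1) < (d-1)^{n-1}` for `n ≥ 2`, `d ≥ 4` and
`m = ⌊(d-2)/2⌋`. -/
theorem choose_lt_pow (n d : ℕ) (hn : 2 ≤ n) (hd : 4 ≤ d) :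
    Nat.choose ((d - 2) / 2 + n - 1) (n - 1) < (d - 1) ^ (n - 1) := by
  have e : (d - 2) / 2 + n - 1 = (d - 2) / 2 + (n - 1) := by omega
  rw [e]
  refine lt_of_le_of_lt (choose_le_aux _ _) ?_
  exact Nat.pow_lt_pow_left (by omega) (by omega)
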